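/- arXiv:2605.19488 — 2 statements merged into one kernel-verified Lean document; each statement's English description precedes it below -/
import Mathlib

section
/- Let n ≥ 2, r ≥ 1 and q ≥ 1. If n prisoners do not have a winning strategy for r rooms with q states, then n+1 prisoners do not have a winning strategy for r rooms with q states. -/
namespace PrisonersGame

/-- A deterministic strategy for a prisoner: given the list of states observed
on previous visits and the state observed on the current visit, return the
state to leave the room in and whether to declare. -/
def Strategy : Type := List ℕ → ℕ → ℕ × Bool

/-- A strategy is valid for `q` states if, whenever all states observed so far
are among `0, …, q-1`, the state it leaves the room in is among `0, …, q-1`. -/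
def Strategy.ValidFor (q : ℕ) (σ : Strategy) : Prop :=
  ∀ (h : List ℕ) (s : ℕ), (∀ x ∈ h, x < q) → s < q → (σ h s).1 < q

/-- A schedule: at each time step, one prisoner is led into one room. -/
def Schedule (n r : ℕ) : Type := ℕ → Fin n × Fin r

/-- A schedule is fair if every prisoner is led into every room infinitely often. -/
def Schedule.Fair {n r : ℕ} (sched : Schedule n r) : Prop :=
  ∀ (p : Fin n) (room : Fin r), {t : ℕ | sched t = (p, room)}.Infinite

/-- The state of play just before step `t`: the current states of the rooms, and
the list of states observed so far by each prisoner. All rooms start in state `0`. -/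
def run {n r : ℕ} (strat : Fin n → Strategy) (sched : Schedule n r) :
    ℕ → (Fin r → ℕ) × (Fin n → List ℕ)
  | 0 => (fun _ => 0, fun _ => [])
  | t + 1 =>
      let prev := run strat sched t
      let p := (sched t).1
      let room := (sched t).2
      let obs := prev.1 room
      (Function.update prev.1 room (strat p (prev.2 p) obs).1,
        Function.update prev.2 p (prev.2 p ++ [obs]))

/-- The prisoner visiting at step `t` declares during that visit. -/
def declaresAt {n r : ℕ} (strat : Fin n → Strategy) (sched : Schedule n r)
    (t : ℕ) : Prop :=
  (strat (sched t).1 ((run strat sched t).2 (sched t).1)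
      ((run strat sched t).1 (sched t).2)).2 = true

/-- Every prisoner has visited every room by step `t` (inclusive). -/
def allVisitedBy {n r : ℕ} (sched : Schedule n r) (t : ℕ) : Prop :=
  ∀ (p : Fin n) (room : Fin r), ∃ s ≤ t, sched s = (p, room)

/-- A strategy profile is winning if, for every fair schedule, some prisoner
eventually declares, and no prisoner ever declares at a time before every
prisoner has visited every room. -/
def Winning {n r : ℕ} (strat : Fin n → Strategy) : Prop :=
  ∀ sched : Schedule n r, sched.Fair →
    (∃ t, declaresAt strat sched t) ∧
    ∀ t, declaresAt strat sched t → allVisitedBy sched t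

/-- `n` prisoners have a winning strategy for `r` rooms with `q` states. -/
def HasWinningStrategy (n r q : ℕ) : Prop :=
  ∃ strat : Fin n → Strategy, (∀ p, (strat p).ValidFor q) ∧ Winning (n := n) (r := r) strat

/-- `n` prisoners have a symmetric winning strategy (all prisoners use the
same strategy) for `r` rooms with `q` states. -/
def HasSymmetricWinningStrategy (n r q : ℕ) : Prop :=
  ∃ σ : Strategy, σ.ValidFor q ∧ Winning (n := n) (r := r) (fun _ => σ)

end PrisonersGame

namespace PrisonersGame

section Simulation

variable {n m r q : ℕ}

/-- One visit of prisoner `a`, as seen through the histories. -/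
def visit (strat : Fin m → Strategy) (a : Fin m) (x : (Fin m → List ℕ) × ℕ) :
    (Fin m → List ℕ) × ℕ :=
  (Function.update x.1 a (x.1 a ++ [x.2]), (strat a (x.1 a) x.2).1)

/-- The simulated histories of a prisoner who plays `a` and then `b` on each visit. -/
def sim (strat : Fin m → Strategy) (a b : Fin m) (h : List ℕ) : Fin m → List ℕ :=
  h.foldl (fun H s => (visit strat b (visit strat a (H, s))).1) (fun _ => [])

/-- The strategy playing `a` and then `b` on each visit. -/
def comb (strat : Fin m → Strategy) (a b : Fin m) : Strategy := fun h s =>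
  let x := visit strat a (sim strat a b h, s)
  ((strat b (x.1 b) x.2).1,
    (strat a (sim strat a b h a) s).2 || (strat b (x.1 b) x.2).2)

lemma sim_snoc (strat : Fin m → Strategy) (a b : Fin m) (h : List ℕ) (s : ℕ) :
    sim strat a b (h ++ [s]) =
      (visit strat b (visit strat a (sim strat a b h, s))).1 := by
  simp [sim, List.foldl_append]

/-- All recorded observations and the current room state are less than `q`. -/
def Good (q : ℕ) (x : (Fin m → List ℕ) × ℕ) : Prop :=
  (∀ j, ∀ y ∈ x.1 j, y < q) ∧ x.2 < q

lemma visit_good {strat : Fin m → Strategy} (hv : ∀ p, (strat p).ValidFor q) (a : Fin m)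
    {x : (Fin m → List ℕ) × ℕ} (hx : Good q x) : Good q (visit strat a x) := by
  refine ⟨fun j y hy => ?_, hv a _ _ (hx.1 a) hx.2⟩
  by_cases hj : j = a
  · subst hj
    simp only [visit, Function.update_self, List.mem_append, List.mem_singleton] at hy
    rcases hy with hy | hy
    · exact hx.1 _ _ hy
    · exact hy ▸ hx.2
  · simp only [visit, Function.update_of_ne hj] at hy
    exact hx.1 _ _ hy

lemma sim_good {strat : Fin m → Strategy} (hv : ∀ p, (strat p).ValidFor q) (a b : Fin m)
    (h : List ℕ) : (∀ x ∈ h, x < q) → ∀ j, ∀ y ∈ sim strat a b h j, y < q := by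
  induction h using List.reverseRecOn with
  | nil => intro _ j y hy; simp [sim] at hy
  | append_singleton l s ih =>
    intro hh
    rw [sim_snoc]
    exact (visit_good hv b (visit_good hv a
      ⟨ih fun x hx => hh x (by simp [hx]), hh s (by simp)⟩)).1

lemma comb_valid {strat : Fin m → Strategy} (hv : ∀ p, (strat p).ValidFor q) (a b : Fin m) :
    (comb strat a b).ValidFor q := fun h s hh hs =>
  (visit_good hv b (visit_good hv a (x := (sim strat a b h, s))
    ⟨sim_good hv a b h hh, hs⟩)).2

/-- The expanded schedule: each visit of `p` becomes visits of `f p` and `g p`. -/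
def expand (f g : Fin n → Fin m) (sched : Schedule n r) : Schedule m r := fun u =>
  (if u % 2 = 0 then f (sched (u / 2)).1 else g (sched (u / 2)).1, (sched (u / 2)).2)

lemma expand_even (f g : Fin n → Fin m) (sched : Schedule n r) (t : ℕ) :
    expand f g sched (2 * t) = (f (sched t).1, (sched t).2) := by
  simp [expand]

lemma expand_odd (f g : Fin n → Fin m) (sched : Schedule n r) (t : ℕ) :
    expand f g sched (2 * t + 1) = (g (sched t).1, (sched t).2) := by
  have h1 : (2 * t + 1) / 2 = t := by omega
  have h2 : (2 * t + 1) % 2 = 1 := by omega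
  simp [expand, h1, h2]

lemma run_succ (strat : Fin n → Strategy) (sched : Schedule n r) (t : ℕ) :
    run strat sched (t + 1) =
      (Function.update (run strat sched t).1 (sched t).2
        (strat (sched t).1 ((run strat sched t).2 (sched t).1)
          ((run strat sched t).1 (sched t).2)).1,
       Function.update (run strat sched t).2 (sched t).1
        ((run strat sched t).2 (sched t).1 ++ [(run strat sched t).1 (sched t).2])) := rfl

lemma visit_congr (strat : Fin m → Strategy) (a j : Fin m) (H H' : Fin m → List ℕ) (s : ℕ)
    (ha : H a = H' a) (hj : H j = H' j) :
    (visit strat a (H, s)).1 j = (visit strat a (H', s)).1 j := by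
  by_cases h : j = a
  · subst h; simp [visit, ha]
  · simp [visit, Function.update_of_ne h, hj]

/-- The invariant relating the two games. -/
lemma run_inv (strat : Fin m → Strategy) (f g : Fin n → Fin m) (o : Fin m → Fin n)
    (hf : ∀ p, o (f p) = p) (hg : ∀ p, o (g p) = p) (sched : Schedule n r) (t : ℕ) :
    (run strat (expand f g sched) (2 * t)).1 =
        (run (fun p => comb strat (f p) (g p)) sched t).1 ∧
      ∀ j, (run strat (expand f g sched) (2 * t)).2 j =
        sim strat (f (o j)) (g (o j))
          ((run (fun p => comb strat (f p) (g p)) sched t).2 (o j)) j := by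
  induction t with
  | zero => exact ⟨rfl, fun j => rfl⟩
  | succ t ih =>
    obtain ⟨ih1, ih2⟩ := ih
    have e : 2 * (t + 1) = 2 * t + 1 + 1 := by ring
    rw [e, run_succ strat _ (2 * t + 1), run_succ strat _ (2 * t), run_succ _ sched t,
      expand_even, expand_odd]
    generalize run (fun p => comb strat (f p) (g p)) sched t = R at *
    generalize run strat (expand f g sched) (2 * t) = S at *
    obtain ⟨S1, S2⟩ := S
    obtain ⟨R1, R2⟩ := R
    dsimp only at ih1 ih2 ⊢
    subst ih1
    generalize (sched t).1 = p
    generalize (sched t).2 = c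
    have hSf : S2 (f p) = sim strat (f p) (g p) (R2 p) (f p) := by
      have := ih2 (f p); rwa [hf] at this
    have hSg : S2 (g p) = sim strat (f p) (g p) (R2 p) (g p) := by
      have := ih2 (g p); rwa [hg] at this
    have hg1 := visit_congr strat (f p) (g p) S2 _ (S1 c) hSf hSg
    constructor
    · simp only [Function.update_self, Function.update_idem]
      congr 1
      simp only [comb]
      rw [← hg1]
      simp only [visit, hSf]
    · intro j
      by_cases hj : o j = p
      · have hSj := ih2 j
        rw [hj] at hSj ⊢
        simp only [Function.update_self]
        rw [sim_snoc]
        have hj1 := visit_congr strat (f p) j S2 _ (S1 c) hSf hSj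
        have key := visit_congr strat (g p) j _ _ (strat (f p) (S2 (f p)) (S1 c)).1 hg1 hj1
        simp only [visit, hSf] at key ⊢
        exact key
      · have h1 : j ≠ f p := fun h => hj (by rw [h, hf])
        have h2 : j ≠ g p := fun h => hj (by rw [h, hg])
        rw [Function.update_of_ne h2, Function.update_of_ne h1, Function.update_of_ne hj]
        exact ih2 j

lemma declares_iff (strat : Fin m → Strategy) (f g : Fin n → Fin m) (o : Fin m → Fin n)
    (hf : ∀ p, o (f p) = p) (hg : ∀ p, o (g p) = p) (sched : Schedule n r) (t : ℕ) :
    declaresAt (fun p => comb strat (f p) (g p)) sched t ↔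
      declaresAt strat (expand f g sched) (2 * t) ∨
      declaresAt strat (expand f g sched) (2 * t + 1) := by
  obtain ⟨ih1, ih2⟩ := run_inv strat f g o hf hg sched t
  unfold declaresAt
  rw [run_succ strat _ (2 * t), expand_even, expand_odd]
  generalize run (fun p => comb strat (f p) (g p)) sched t = R at *
  generalize run strat (expand f g sched) (2 * t) = S at *
  obtain ⟨S1, S2⟩ := S
  obtain ⟨R1, R2⟩ := R
  dsimp only at ih1 ih2 ⊢
  subst ih1
  generalize (sched t).1 = p
  generalize (sched t).2 = c
  have hSf : S2 (f p) = sim strat (f p) (g p) (R2 p) (f p) := by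
    have := ih2 (f p); rwa [hf] at this
  have hSg : S2 (g p) = sim strat (f p) (g p) (R2 p) (g p) := by
    have := ih2 (g p); rwa [hg] at this
  have hg1 := visit_congr strat (f p) (g p) S2 _ (S1 c) hSf hSg
  simp only [comb, Bool.or_eq_true]
  rw [← hg1]
  simp only [visit, hSf, Function.update_self]

lemma winning_comb (strat : Fin m → Strategy) (f g : Fin n → Fin m) (o : Fin m → Fin n)
    (hf : ∀ p, o (f p) = p) (hg : ∀ p, o (g p) = p) (ho : ∀ j, j = f (o j) ∨ j = g (o j))
    (hw : Winning (r := r) strat) :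
    Winning (r := r) (fun p => comb strat (f p) (g p)) := by
  intro sched hfair
  have hfair' : (expand f g sched).Fair := by
    intro j c
    have hinf := hfair (o j) c
    rcases ho j with h | h
    · refine (hinf.image (f := fun t => 2 * t)
        (fun x _ y _ hxy => by dsimp only at hxy; omega)).mono ?_
      rintro _ ⟨t, ht, rfl⟩
      simp only [Set.mem_setOf_eq] at ht ⊢
      rw [expand_even, ht]
      exact Prod.ext h.symm rfl
    · refine (hinf.image (f := fun t => 2 * t + 1)
        (fun x _ y _ hxy => by dsimp only at hxy; omega)).mono ?_
      rintro _ ⟨t, ht, rfl⟩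
      simp only [Set.mem_setOf_eq] at ht ⊢
      rw [expand_odd, ht]
      exact Prod.ext h.symm rfl
  obtain ⟨⟨u, hu⟩, h2⟩ := hw _ hfair'
  constructor
  · refine ⟨u / 2, (declares_iff strat f g o hf hg sched _).2 ?_⟩
    rcases Nat.mod_two_eq_zero_or_one u with h | h
    · left; rwa [show 2 * (u / 2) = u by omega]
    · right; rwa [show 2 * (u / 2) + 1 = u by omega]
  · intro t ht p c
    have hs : ∃ s ≤ 2 * t + 1, expand f g sched s = (f p, c) := by
      rcases (declares_iff strat f g o hf hg sched t).1 ht with h | h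
      · obtain ⟨s, hs, hs'⟩ := h2 _ h (f p) c
        exact ⟨s, by omega, hs'⟩
      · exact h2 _ h (f p) c
    obtain ⟨s, hs, hs'⟩ := hs
    refine ⟨s / 2, by omega, ?_⟩
    have ha := congrArg Prod.fst hs'
    have hb := congrArg Prod.snd hs'
    simp only [expand] at ha hb
    refine Prod.ext ?_ hb
    have ha' := congrArg o ha
    rw [hf] at ha'
    split_ifs at ha'
    · rwa [hf] at ha'
    · rwa [hg] at ha'

end Simulation

end PrisonersGame

open PrisonersGame in
/-- If `n` prisoners do not have a winning strategy for `r` rooms with `q`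
states, then neither do `n + 1` prisoners. -/
theorem monotone_in_prisoners (n r q : ℕ) (hn : 2 ≤ n) (hr : 1 ≤ r) (hq : 1 ≤ q)
    (h : ¬ HasWinningStrategy n r q) : ¬ HasWinningStrategy (n + 1) r q := by
  rintro ⟨strat, hv, hw⟩
  let f : Fin n → Fin (n + 1) := Fin.castSucc
  let g : Fin n → Fin (n + 1) := fun p => if p.val = 0 then Fin.last n else p.castSucc
  let o : Fin (n + 1) → Fin n := fun j => if hj : j.val < n then ⟨j.val, hj⟩ else ⟨0, by omega⟩
  refine h ⟨fun p => comb strat (f p) (g p), fun p => comb_valid hv _ _,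
    winning_comb strat f g o ?_ ?_ ?_ hw⟩
  · intro p; simp [f, o]
  · intro p
    by_cases hp : p.val = 0
    · apply Fin.ext; simp [g, o, hp]
    · simp [g, o, hp]
  · intro j
    by_cases hj : j.val < n
    · left; apply Fin.ext; simp [f, o, hj]
    · right; apply Fin.ext; simp [g, o, hj]; omega
end

section
/- For every number of prisoners n with 1 ≤ n ≤ 4, every number of rooms r ≥ 1 and every number of states q ≥ 3, the n prisoners have a winning strategy for r rooms with q states. -/
namespace PrisonersGame

/-- One virtual prisoner acting on an observed state. -/
def lstep (ins : Fin 4 → ℕ → Option (ℕ × ℕ)) (x : ℕ × (Fin 4 → ℕ)) (v : Fin 4) :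
    ℕ × (Fin 4 → ℕ) :=
  match ins v (x.2 v) with
  | some (a, b) => if a = x.1 then (b, Function.update x.2 v (x.2 v + 1)) else x
  | none => x

/-- A prisoner acts by letting all its virtual prisoners act in turn. -/
def pstep {n : ℕ} (f : Fin 4 → Fin n) (ins : Fin 4 → ℕ → Option (ℕ × ℕ)) (p : Fin n)
    (x : ℕ × (Fin 4 → ℕ)) : ℕ × (Fin 4 → ℕ) :=
  ((List.finRange 4).filter (fun v => f v = p)).foldl (lstep ins) x

def memo {n : ℕ} (f : Fin 4 → Fin n) (ins : Fin 4 → ℕ → Option (ℕ × ℕ)) (p : Fin n)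
    (h : List ℕ) : Fin 4 → ℕ :=
  h.foldl (fun s o => (pstep f ins p (o, s)).2) (fun _ => 0)

def theStrat {n : ℕ} (f : Fin 4 → Fin n) (ins : Fin 4 → ℕ → Option (ℕ × ℕ)) (dv : Fin 4)
    (E : ℕ) (p : Fin n) : Strategy := fun h o =>
  ((pstep f ins p (o, memo f ins p h)).1,
    decide (f dv = p ∧ (pstep f ins p (o, memo f ins p h)).2 dv = E))

/-- A certificate that four linear programs win. -/
structure Cert (r : ℕ) where
  ins : Fin 4 → ℕ → Option (ℕ × ℕ)
  len : ℕ
  dv : Fin 4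
  E : ℕ
  Inv : (Fin r → ℕ) → (Fin 4 → ℕ) → (Fin 4 → Fin r → Prop) → Prop
  tgt_lt : ∀ v k a b, ins v k = some (a, b) → b < 3
  len_lt : ∀ v k a b, ins v k = some (a, b) → k < len
  init : ∀ vis, Inv (fun _ => 0) (fun _ => 0) vis
  mono : ∀ R p vis vis', Inv R p vis → (∀ v i, vis v i → vis' v i) → Inv R p vis'
  step : ∀ R p vis v i b, Inv R p vis → vis v i → ins v (p v) = some (R i, b) →
    Inv (Function.update R i b) (Function.update p v (p v + 1)) vis
  progress : ∀ R p vis, Inv R p vis → p dv = E ∨ ∃ v i b, ins v (p v) = some (R i, b)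
  done : ∀ R p vis, Inv R p vis → p dv = E → ∀ v i, vis v i

/-- Effect of a list of virtual prisoners acting. -/
theorem fold_spec {r n : ℕ} (K : Cert r) (f : Fin 4 → Fin n) (p : Fin n) (i : Fin r)
    (R : Fin r → ℕ) (P : Fin 4 → ℕ) (vis : Fin 4 → Fin r → Prop)
    (hvis : ∀ v, f v = p → vis v i) (L : List (Fin 4)) :
    (∀ v ∈ L, f v = p) → ∀ x : ℕ × (Fin 4 → ℕ),
    K.Inv (Function.update R i x.1) (fun v => if f v = p then x.2 v else P v) vis →
    (∀ v, x.2 v ≤ K.len) →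
    K.Inv (Function.update R i (L.foldl (lstep K.ins) x).1)
      (fun v => if f v = p then (L.foldl (lstep K.ins) x).2 v else P v) vis ∧
    (∀ v, (L.foldl (lstep K.ins) x).2 v ≤ K.len) ∧
    (∀ v, x.2 v ≤ (L.foldl (lstep K.ins) x).2 v) ∧
    ((L.foldl (lstep K.ins) x = x ∧ ∀ v ∈ L, ∀ b, K.ins v (x.2 v) ≠ some (x.1, b)) ∨
      ∃ v ∈ L, x.2 v < (L.foldl (lstep K.ins) x).2 v) := by
  induction L with
  | nil => 
    intro _ x h1 h2
    exact ⟨h1, h2, fun v => le_rfl, Or.inl ⟨rfl, by simp⟩⟩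
  | cons w L ih =>
    intro hL x h1 h2
    have hw : f w = p := hL w (by simp)
    have hL' : ∀ v ∈ L, f v = p := fun v hv => hL v (by simp [hv])
    simp only [List.foldl_cons]
    by_cases hf : ∃ b, K.ins w (x.2 w) = some (x.1, b)
    · obtain ⟨b, hb⟩ := hf
      have hs : lstep K.ins x w = (b, Function.update x.2 w (x.2 w + 1)) := by
        simp [lstep, hb]
      have hlt := K.len_lt _ _ _ _ hb
      have h3 := K.step _ _ _ w i b h1 (hvis w hw) (by simp [hw, hb])
      have h4 := ih hL' (b, Function.update x.2 w (x.2 w + 1)) (by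
        convert h3 using 1
        · simp
        · funext v
          by_cases hv : v = w
          · subst hv; simp [hw]
          · simp [hv]) (by
        intro v
        by_cases hv : v = w
        · subst hv; simp; omega
        · simpa [hv] using h2 v)
      rw [hs]
      obtain ⟨a1, a2, a3, -⟩ := h4
      have a4 : ∀ v, x.2 v ≤ Function.update x.2 w (x.2 w + 1) v := by
        intro v
        by_cases hv : v = w
        · subst hv; simp
        · simp [hv]
      refine ⟨a1, a2, fun v => (a4 v).trans (a3 v), Or.inr ⟨w, by simp, ?_⟩⟩
      have := a3 w
      simp only [Function.update_self] at this
      omega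
    · push Not at hf
      have hs : lstep K.ins x w = x := by
        unfold lstep
        split
        · rename_i a b h
          split_ifs with hh
          · exact absurd (hh ▸ h) (hf b)
          · rfl
        · rfl
      rw [hs]
      obtain ⟨a1, a2, a3, a4⟩ := ih hL' x h1 h2
      refine ⟨a1, a2, a3, ?_⟩
      rcases a4 with ⟨e, a4⟩ | ⟨v, hv, h⟩
      · refine Or.inl ⟨e, ?_⟩
        intro v hv b
        rcases List.mem_cons.1 hv with rfl | hv
        · exact hf b
        · exact a4 v hv b
      · exact Or.inr ⟨v, by simp [hv], h⟩

theorem fold_valid (ins : Fin 4 → ℕ → Option (ℕ × ℕ))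
    (ht : ∀ v k a b, ins v k = some (a, b) → b < 3) (q : ℕ) (hq : 3 ≤ q) (L : List (Fin 4)) :
    ∀ x : ℕ × (Fin 4 → ℕ), x.1 < q → (L.foldl (lstep ins) x).1 < q := by
  induction L with
  | nil => intro x h; exact h
  | cons w L ih =>
    intro x h
    refine ih _ ?_
    unfold lstep
    split
    · rename_i a b hh
      split_ifs
      · exact lt_of_lt_of_le (ht _ _ _ _ hh) hq
      · exact h
    · exact h

theorem Cert.wins {r : ℕ} (K : Cert r) (n q : ℕ) (hn1 : 1 ≤ n) (hn4 : n ≤ 4) (hq : 3 ≤ q) :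
    HasWinningStrategy n r q := by
  let f : Fin 4 → Fin n := fun v => ⟨min v.1 (n - 1), by omega⟩
  have fsurj : ∀ p, ∃ v, f v = p := by
    intro p
    refine ⟨⟨p.1, by omega⟩, ?_⟩
    apply Fin.ext
    have := p.2
    simp only [f]
    omega
  clear_value f
  refine ⟨theStrat f K.ins K.dv K.E, ?_, ?_⟩
  · intro p h s _ hs
    exact fold_valid K.ins K.tgt_lt q hq _ _ hs
  intro sched fair
  set strat := theStrat f K.ins K.dv K.E with hstrat
  let R : ℕ → Fin r → ℕ := fun t => (run strat sched t).1
  let H : ℕ → Fin n → List ℕ := fun t => (run strat sched t).2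
  let M : ℕ → Fin n → Fin 4 → ℕ := fun t p => memo f K.ins p (H t p)
  let Pc : ℕ → Fin 4 → ℕ := fun t v => M t (f v) v
  let vis : ℕ → Fin 4 → Fin r → Prop := fun t v i => ∃ s < t, sched s = (f v, i)
  let X : ℕ → ℕ × (Fin 4 → ℕ) := fun t =>
    pstep f K.ins (sched t).1 (R t (sched t).2, M t (sched t).1)
  have hR : ∀ t, R (t + 1) = Function.update (R t) (sched t).2 (X t).1 := fun t => rfl
  have hM : ∀ t, M (t + 1) = Function.update (M t) (sched t).1 (X t).2 := by
    intro t
    funext p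
    by_cases hp : p = (sched t).1
    · subst hp
      simp only [M, H, run, Function.update_self, memo, List.foldl_append, X, R]
      rfl
    · have : H (t + 1) p = H t p := by simp [H, run, hp]
      simp [hp, M, this]
  have hPc : ∀ t v, Pc (t + 1) v = if f v = (sched t).1 then (X t).2 v else Pc t v := by
    intro t v
    simp only [Pc, hM]
    split_ifs with h
    · rw [h]; simp
    · simp [h]
  have hdecl : ∀ t, declaresAt strat sched t ↔ (f K.dv = (sched t).1 ∧ Pc (t + 1) K.dv = K.E) := by
    intro t
    have : declaresAt strat sched t ↔ (f K.dv = (sched t).1 ∧ (X t).2 K.dv = K.E) := by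
      simp only [declaresAt, hstrat, theStrat, decide_eq_true_eq]
      rfl
    rw [this, hPc]
    constructor
    · rintro ⟨h1, h2⟩; exact ⟨h1, by simp [h1, h2]⟩
    · rintro ⟨h1, h2⟩; exact ⟨h1, by simpa [h1] using h2⟩
  have hmain : ∀ t, K.Inv (R t) (Pc t) (vis t) ∧ (∀ p v, M t p v ≤ K.len) := by
    intro t
    induction t with
    | zero => exact ⟨K.init _, fun p v => Nat.zero_le _⟩
    | succ t ih =>
      have hs := fold_spec K f (sched t).1 (sched t).2 (R t) (Pc t) (vis (t + 1))
        (fun v hv => ⟨t, by omega, by rw [hv]⟩)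
        ((List.finRange 4).filter (fun v => f v = (sched t).1)) (by simp)
        (R t (sched t).2, M t (sched t).1) (by
          refine K.mono _ _ (vis t) _ ?_ ?_
          · convert ih.1 using 1
            · simp
            · funext v
              split_ifs with h
              · simp [Pc, h]
              · rfl
          · rintro v i ⟨s, hs, e⟩; exact ⟨s, by omega, e⟩) (ih.2 _)
      obtain ⟨a1, a2, -, -⟩ := hs
      refine ⟨?_, ?_⟩
      · rw [hR, show Pc (t + 1) = _ from funext (hPc t)]
        exact a1
      · intro p v
        rw [hM]
        by_cases hp : p = (sched t).1
        · subst hp; simp only [Function.update_self]; exact a2 v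
        · simpa [hp] using ih.2 p v
  have hstep : ∀ t, (∀ v, Pc t v ≤ Pc (t + 1) v) ∧
      ((∀ v, f v = (sched t).1 → ∀ b, K.ins v (Pc t v) ≠ some (R t (sched t).2, b)) ∧
        R (t + 1) = R t ∧ Pc (t + 1) = Pc t ∨ ∃ v, Pc t v < Pc (t + 1) v) := by
    intro t
    have ih := hmain t
    have hs := fold_spec K f (sched t).1 (sched t).2 (R t) (Pc t) (vis (t + 1))
        (fun v hv => ⟨t, by omega, by rw [hv]⟩)
        ((List.finRange 4).filter (fun v => f v = (sched t).1)) (by simp)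
        (R t (sched t).2, M t (sched t).1) (by
          refine K.mono _ _ (vis t) _ ?_ ?_
          · convert ih.1 using 1
            · simp
            · funext v
              split_ifs with h
              · simp [Pc, h]
              · rfl
          · rintro v i ⟨s, hs, e⟩; exact ⟨s, by omega, e⟩) (ih.2 _)
    obtain ⟨-, -, a3, a4⟩ := hs
    change ∀ v, M t (sched t).1 v ≤ (X t).2 v at a3
    refine ⟨?_, ?_⟩
    · intro v
      rw [hPc]
      split_ifs with h
      · have := a3 v; simpa [Pc, h] using this
      · exact le_rfl
    · rcases a4 with ⟨e, h⟩ | ⟨v, hv, h⟩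
      · left
        change X t = _ at e
        refine ⟨?_, ?_, ?_⟩
        · intro v hv b
          have := h v (by simp [hv]) b
          simpa [Pc, hv] using this
        · rw [hR, e]; simp
        · funext v
          rw [hPc, e]
          split_ifs with h
          · simp [Pc, h]
          · rfl
      · right
        have hv' : f v = (sched t).1 := by simpa using hv
        change M t (sched t).1 v < (X t).2 v at h
        refine ⟨v, ?_⟩
        rw [hPc]
        simpa [hv', Pc] using h
  have hfin : ∃ T, ∀ t ≥ T, R t = R T ∧ Pc t = Pc T := by
    let S : ℕ → ℕ := fun t => ∑ v, Pc t v
    have hSm : ∀ t, S t ≤ S (t + 1) := fun t => Finset.sum_le_sum (fun v _ => (hstep t).1 v)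
    have hSb : ∀ t, S t ≤ 4 * K.len := by
      intro t
      have : S t ≤ ∑ _v : Fin 4, K.len := Finset.sum_le_sum (fun v _ => (hmain t).2 _ v)
      simpa using this
    have hmonoS : Monotone S := monotone_nat_of_le_succ hSm
    obtain ⟨T, hT⟩ : ∃ T, ∀ t ≥ T, S t = S T := by
      by_contra hcon
      push Not at hcon
      have : ∀ k, ∃ t, k ≤ S t := by
        intro k
        induction k with
        | zero => exact ⟨0, Nat.zero_le _⟩
        | succ k ih =>
          obtain ⟨t, ht⟩ := ih
          obtain ⟨t', ht', hne⟩ := hcon t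
          have := hmonoS ht'
          exact ⟨t', by omega⟩
      obtain ⟨t, ht⟩ := this (4 * K.len + 1)
      have := hSb t
      omega
    refine ⟨T, ?_⟩
    intro t ht
    induction t, ht using Nat.le_induction with
    | base => exact ⟨rfl, rfl⟩
    | succ t ht ih =>
      rcases (hstep t).2 with ⟨-, h1, h2⟩ | ⟨v, hv⟩
      · exact ⟨h1.trans ih.1, h2.trans ih.2⟩
      · exfalso
        have : S t < S (t + 1) :=
          Finset.sum_lt_sum (fun v _ => (hstep t).1 v) ⟨v, Finset.mem_univ _, hv⟩
        have e1 := hT t ht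
        have e2 := hT (t + 1) (by omega)
        omega
  have hinf : ∀ T p i, ∃ t ≥ T, sched t = (p, i) := by
    intro T p i
    obtain ⟨t, ht, hlt⟩ := (fair p i).exists_gt T
    exact ⟨t, hlt.le, ht⟩
  refine ⟨?_, ?_⟩
  · obtain ⟨T, hT⟩ := hfin
    have hE : Pc T K.dv = K.E := by
      rcases K.progress _ _ _ (hmain T).1 with h | ⟨v, i, b, h⟩
      · exact h
      · exfalso
        obtain ⟨t, ht, hs⟩ := hinf T (f v) i
        rcases (hstep t).2 with ⟨h1, -, -⟩ | ⟨w, hw⟩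
        · apply h1 v (by rw [hs]) b
          rw [(hT t ht).1, (hT t ht).2, hs]
          exact h
        · rw [(hT t ht).2, (hT (t + 1) (by omega)).2] at hw
          exact lt_irrefl _ hw
    by_cases hr : Nonempty (Fin r)
    · obtain ⟨i⟩ := hr
      obtain ⟨t, ht, hs⟩ := hinf T (f K.dv) i
      refine ⟨t, (hdecl t).2 ⟨by rw [hs], ?_⟩⟩
      rw [(hT (t + 1) (by omega)).2, hE]
    · exact absurd ⟨(sched 0).2⟩ hr
  · intro t ht p i
    obtain ⟨-, h2⟩ := (hdecl t).1 ht
    obtain ⟨v, rfl⟩ := fsurj p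
    obtain ⟨s, hs, e⟩ := K.done _ _ _ (hmain (t + 1)).1 h2 v i
    exact ⟨s, by omega, e⟩

end PrisonersGame


namespace PrisonersGame

/-- Number of rooms in state `v`. -/
def cnt {r : ℕ} (R : Fin r → ℕ) (v : ℕ) : ℕ := (Finset.univ.filter (fun i => R i = v)).card

theorem cnt_update {r : ℕ} (R : Fin r → ℕ) (i : Fin r) (b v : ℕ) :
    cnt (Function.update R i b) v + (if R i = v then 1 else 0)
      = cnt R v + (if b = v then 1 else 0) := by
  unfold cnt
  simp only [Finset.card_filter]
  rw [← Finset.add_sum_erase _ _ (Finset.mem_univ i),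
    ← Finset.add_sum_erase (a := i) _ (fun j => if R j = v then 1 else 0) (Finset.mem_univ i)]
  have : ∑ x ∈ Finset.univ.erase i, (if Function.update R i b x = v then 1 else 0)
      = ∑ x ∈ Finset.univ.erase i, (if R x = v then 1 else 0) := by
    apply Finset.sum_congr rfl
    intro x hx
    rw [Function.update_of_ne (Finset.ne_of_mem_erase hx)]
  rw [this]
  simp only [Function.update_self]
  omega

theorem cnt_pos {r : ℕ} (R : Fin r → ℕ) (i : Fin r) : 0 < cnt R (R i) :=
  Finset.card_pos.2 ⟨i, by simp⟩

theorem cnt_ex {r : ℕ} {R : Fin r → ℕ} {v : ℕ} (h : 0 < cnt R v) : ∃ i, R i = v := by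
  obtain ⟨i, hi⟩ := Finset.card_pos.1 h
  exact ⟨i, by simpa using hi⟩

theorem cnt_const {r : ℕ} (v : ℕ) : cnt (fun _ : Fin r => 0) v = if v = 0 then r else 0 := by
  unfold cnt
  by_cases h : v = 0
  · simp [h]
  · simp [h, Ne.symm h]

theorem cnt_pos' {r : ℕ} (R : Fin r → ℕ) (i : Fin r) (v : ℕ) (h : R i = v) : 0 < cnt R v :=
  h ▸ cnt_pos R i

end PrisonersGame


namespace PrisonersGame

/-- Programs of the four prisoners when there are at least three rooms. -/
def insBig (r : ℕ) (v : Fin 4) (k : ℕ) : Option (ℕ × ℕ) :=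
  match v with
  | 0 => if k < r then some (0, 1) else if k < 4 * r + 3 then some (2, 1)
      else if k < 4 * r + 4 then some (1, 0) else none
  | 1 => if k < r + 1 then some (1, 2) else if k < r + 2 then some (0, 2)
      else if k < 3 * r + 2 then some (1, 0) else if k < 3 * r + 3 then some (2, 2)
      else if k < 3 * r + 4 then some (0, 2) else if k < 4 * r + 4 then some (2, 0)
      else if k < 5 * r + 4 then some (0, 1) else if k < 6 * r + 4 then some (2, 0) else none
  | 2 => if k < r + 1 then some (1, 2) else if k < r + 2 then some (0, 0)
      else if k < r + 4 then some (2, 0) else if k < 2 * r + 4 then some (0, 2)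
      else if k < 3 * r + 4 then some (2, 1) else if k < 6 * r + 5 then some (0, 1)
      else if k < 6 * r + 6 then some (1, 2) else none
  | 3 => if k < r + 1 then some (1, 2) else if k < r + 2 then some (0, 2)
      else if k < 3 * r + 2 then some (1, 0) else if k < 3 * r + 3 then some (2, 0)
      else if k < 5 * r + 3 then some (1, 2) else none

def Ph1 (r a b c d n0 n2 : ℕ) : Prop :=
  a ≤ 4 * r + 3 ∧ b ≤ r + 1 ∧ c ≤ r + 1 ∧ d ≤ r + 1 ∧
    ((a ≤ r ∧ n0 + a = r ∧ n2 = b + c + d) ∨ (r ≤ a ∧ n0 = 0 ∧ n2 + a = b + c + d + r))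

def Ph2 (r a b c d n1 n2 : ℕ) : Prop :=
  a = 4 * r + 4 ∧ r + 1 ≤ b ∧ r + 1 ≤ d ∧ r + 1 ≤ c ∧ c ≤ 2 * r + 4 ∧
    n1 + 1 + (b - (r + 2)) + (d - (r + 2)) = r ∧
    ((c ≤ r + 4 ∧ n2 + (c - (r + 2)) = min (b - (r + 1)) 1 + min (d - (r + 1)) 1) ∨
      (r + 4 ≤ c ∧ r + 2 ≤ b ∧ r + 2 ≤ d ∧ n2 + (r + 4) = c))

def Ph3 (r a b c d n0 n2 : ℕ) : Prop :=
  a = 4 * r + 4 ∧ 2 * r + 4 ≤ c ∧ c ≤ 6 * r + 5 ∧ r + 2 ≤ b ∧ b ≤ 3 * r + 2 ∧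
    r + 2 ≤ d ∧ d ≤ 3 * r + 2 ∧
    ((c ≤ 3 * r + 4 ∧ n2 + c = 3 * r + 4 ∧ n0 + 3 * r + 3 = b + d) ∨
      (3 * r + 4 ≤ c ∧ n2 = 0 ∧ n0 + c = b + d + 1))

def Ph4 (r a b c d n0 n1 n2 : ℕ) : Prop :=
  a = 4 * r + 4 ∧ c = 6 * r + 6 ∧ 3 * r + 2 ≤ b ∧ b ≤ 6 * r + 4 ∧ 3 * r + 2 ≤ d ∧
    ((b ≤ 3 * r + 4 ∧ n0 + (b - (3 * r + 3)) = min (d - (3 * r + 2)) 1 ∧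
        n1 + 1 + (d - (3 * r + 3)) = r) ∨
      (3 * r + 4 ≤ b ∧ b ≤ 4 * r + 4 ∧ 3 * r + 3 ≤ d ∧ n0 + 3 * r + 4 = b ∧
        n1 + 1 + (d - (3 * r + 3)) = r) ∨
      (4 * r + 4 ≤ b ∧ b ≤ 5 * r + 4 ∧ n0 + b = 5 * r + 4 ∧ n2 + 4 * r + 2 = d) ∨
      (5 * r + 4 ≤ b ∧ n0 + 5 * r + 4 = b ∧ n1 + d = 5 * r + 2))

def Ar (r a b c d n0 n1 n2 : ℕ) : Prop :=
  n0 + n1 + n2 = r ∧ (Ph1 r a b c d n0 n2 ∨ Ph2 r a b c d n1 n2 ∨ Ph3 r a b c d n0 n2 ∨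
    Ph4 r a b c d n0 n1 n2)

/-- Who is known to have visited which rooms. -/
def VisB (r a b c : ℕ) (x : ℕ) (vA vB vC vD : Prop) : Prop :=
  (vA ∨ (x = 0 ∧ a < r)) ∧
  (r + 4 ≤ c → vC ∨ (x ≠ 2 ∧ c < 2 * r + 4)) ∧
  (3 * r + 4 ≤ b → vB ∨ (x ≠ 0 ∧ b < 4 * r + 4)) ∧
  (4 * r + 4 ≤ b → vD ∨ (b < 5 * r + 4 ∧ x ≠ 2) ∨ (b < 6 * r + 4 ∧ x = 1))

/-- The program `I` cannot act on any room. -/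
def Stuck (I : Option (ℕ × ℕ)) (n0 n1 n2 : ℕ) : Prop :=
  ∀ s t, I = some (s, t) → ¬((s = 0 ∧ 0 < n0) ∨ (s = 1 ∧ 0 < n1) ∨ (s = 2 ∧ 0 < n2))

theorem Stuck.s0 {t n0 n1 n2 : ℕ} (h : Stuck (some (0, t)) n0 n1 n2) : n0 = 0 := by
  have := h 0 t rfl
  omega

theorem Stuck.s1 {t n0 n1 n2 : ℕ} (h : Stuck (some (1, t)) n0 n1 n2) : n1 = 0 := by
  have := h 1 t rfl
  omega

theorem Stuck.s2 {t n0 n1 n2 : ℕ} (h : Stuck (some (2, t)) n0 n1 n2) : n2 = 0 := by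
  have := h 2 t rfl
  omega

set_option maxHeartbeats 2000000 in
theorem ar_progress (r a b c d n0 n1 n2 : ℕ) (hr : 3 ≤ r) (h : Ar r a b c d n0 n1 n2)
    (hA : Stuck (insBig r 0 a) n0 n1 n2) (hB : Stuck (insBig r 1 b) n0 n1 n2)
    (hC : Stuck (insBig r 2 c) n0 n1 n2) (hD : Stuck (insBig r 3 d) n0 n1 n2) :
    b = 6 * r + 4 := by
  simp only [insBig] at hA hB hC hD
  have hA' : (a < r → n0 = 0) ∧ (r ≤ a → a < 4 * r + 3 → n2 = 0) ∧
      (a = 4 * r + 3 → n1 = 0) := by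
    split_ifs at hA <;> (try have := hA.s0) <;> (try have := hA.s1) <;> (try have := hA.s2) <;> omega
  have hB' : (b < r + 1 → n1 = 0) ∧ (b = r + 1 → n0 = 0) ∧ (r + 2 ≤ b → b < 3 * r + 2 → n1 = 0) ∧
      (b = 3 * r + 2 → n2 = 0) ∧ (b = 3 * r + 3 → n0 = 0) ∧
      (3 * r + 4 ≤ b → b < 4 * r + 4 → n2 = 0) ∧ (4 * r + 4 ≤ b → b < 5 * r + 4 → n0 = 0) ∧
      (5 * r + 4 ≤ b → b < 6 * r + 4 → n2 = 0) := by
    split_ifs at hB <;> (try have := hB.s0) <;> (try have := hB.s1) <;> (try have := hB.s2) <;> omega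
  have hC' : (c < r + 1 → n1 = 0) ∧ (c = r + 1 → n0 = 0) ∧ (r + 2 ≤ c → c < r + 4 → n2 = 0) ∧
      (r + 4 ≤ c → c < 2 * r + 4 → n0 = 0) ∧ (2 * r + 4 ≤ c → c < 3 * r + 4 → n2 = 0) ∧
      (3 * r + 4 ≤ c → c < 6 * r + 5 → n0 = 0) ∧ (c = 6 * r + 5 → n1 = 0) := by
    split_ifs at hC <;> (try have := hC.s0) <;> (try have := hC.s1) <;> (try have := hC.s2) <;> omega
  have hD' : (d < r + 1 → n1 = 0) ∧ (d = r + 1 → n0 = 0) ∧ (r + 2 ≤ d → d < 3 * r + 2 → n1 = 0) ∧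
      (d = 3 * r + 2 → n2 = 0) ∧ (3 * r + 3 ≤ d → d < 5 * r + 3 → n1 = 0) := by
    split_ifs at hD <;> (try have := hD.s0) <;> (try have := hD.s1) <;> (try have := hD.s2) <;> omega
  clear hA hB hC hD
  obtain ⟨hA1, hA2, hA3⟩ := hA'
  obtain ⟨hB1, hB2, hB3, hB4, hB5, hB6, hB7, hB8⟩ := hB'
  obtain ⟨hC1, hC2, hC3, hC4, hC5, hC6, hC7⟩ := hC'
  obtain ⟨hD1, hD2, hD3, hD4, hD5⟩ := hD'
  obtain ⟨hn, h | h | h | h⟩ := h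
  · clear hB2 hB3 hB4 hB5 hB6 hB7 hB8 hC2 hC3 hC4 hC5 hC6 hC7 hD2 hD3 hD4 hD5
    obtain ⟨h1, h2, h3, h4, h5 | h5⟩ := h <;> omega
  · clear hA1 hA2 hA3 hB1 hB4 hB5 hB6 hB7 hB8 hC1 hC6 hC7 hD1 hD4 hD5
    obtain ⟨h1, h2, h3, h4, h5, h6, h7 | h7⟩ := h
    · obtain ⟨h8, h9⟩ := h7
      have e1 : r + 2 ≤ b → n1 = 0 := fun hh => hB3 hh (by omega)
      have e2 : r + 2 ≤ d → n1 = 0 := fun hh => hD3 hh (by omega)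
      have e3 : c = r + 4 → n0 = 0 := fun hh => hC4 (by omega) (by omega)
      clear hB3 hD3 hC4 hC5
      have mb : (b = r + 1 ∧ min (b - (r + 1)) 1 = 0 ∧ b - (r + 2) = 0) ∨
        (r + 2 ≤ b ∧ min (b - (r + 1)) 1 = 1) := by omega
      have md : (d = r + 1 ∧ min (d - (r + 1)) 1 = 0 ∧ d - (r + 2) = 0) ∨
        (r + 2 ≤ d ∧ min (d - (r + 1)) 1 = 1) := by omega
      have mc : c = r + 1 ∨ c = r + 2 ∨ c = r + 3 ∨ c = r + 4 := by omega
      generalize min (b - (r + 1)) 1 = u at *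
      generalize min (d - (r + 1)) 1 = w at *
      generalize b - (r + 2) = u' at *
      generalize d - (r + 2) = w' at *
      rcases mb with mb | mb <;> rcases md with md | md <;> rcases mc with mc | mc | mc | mc <;>
        omega
    · clear hB2 hC2 hC3 hD2
      omega
  · clear hA1 hA2 hA3 hB1 hB2 hB5 hB6 hB7 hB8 hC1 hC2 hC3 hC4 hD1 hD2 hD5
    obtain ⟨h1, h2, h3, h4, h5, h6, h7, h8 | h8⟩ := h <;> omega
  · clear hA1 hA2 hA3 hB1 hB2 hB3 hC1 hC2 hC3 hC4 hC5 hC6 hC7 hD1 hD2 hD3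
    obtain ⟨h1, h2, h3, h4, h5, h6 | h6 | h6 | h6⟩ := h <;> omega

end PrisonersGame


namespace PrisonersGame

set_option maxHeartbeats 4000000 in
theorem ar_step0 (r a b c d n0 n1 n2 m0 m1 m2 s t : ℕ) (hr : 3 ≤ r)
    (h : Ar r a b c d n0 n1 n2) (hi : insBig r 0 a = some (s, t))
    (p0 : s = 0 → 0 < n0) (p1 : s = 1 → 0 < n1) (p2 : s = 2 → 0 < n2)
    (h0 : m0 + (if s = 0 then 1 else 0) = n0 + (if t = 0 then 1 else 0))
    (h1 : m1 + (if s = 1 then 1 else 0) = n1 + (if t = 1 then 1 else 0))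
    (h2 : m2 + (if s = 2 then 1 else 0) = n2 + (if t = 2 then 1 else 0)) :
    Ar r (a + 1) b c d m0 m1 m2 := by
  simp only [insBig] at hi
  obtain ⟨hn, h⟩ := h
  split_ifs at hi <;> simp only [Option.some.injEq, Prod.mk.injEq] at hi <;>
    obtain ⟨rfl, rfl⟩ := hi <;> simp at p0 p1 p2 h0 h1 h2 <;>
    refine ⟨by omega, ?_⟩ <;>
    rcases h with ⟨g1, g2, g3, g4, g5 | g5⟩ | ⟨g1, g2, g3, g4, g5, g6, g7 | g7⟩ |
      ⟨g1, g2, g3, g4, g5, g6, g7, g8 | g8⟩ | ⟨g1, g2, g3, g4, g5, g6 | g6 | g6 | g6⟩ <;>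
    first
    | (exfalso; omega)
    | exact Or.inl ⟨by omega, by omega, by omega, by omega, Or.inl (by omega)⟩
    | exact Or.inl ⟨by omega, by omega, by omega, by omega, Or.inr (by omega)⟩
    | exact Or.inr (Or.inl ⟨by omega, by omega, by omega, by omega, by omega, by omega,
        Or.inl (by omega)⟩)
    | exact Or.inr (Or.inl ⟨by omega, by omega, by omega, by omega, by omega, by omega,
        Or.inr (by omega)⟩)
    | exact Or.inr (Or.inr (Or.inl ⟨by omega, by omega, by omega, by omega, by omega, by omega,
        by omega, Or.inl (by omega)⟩))
    | exact Or.inr (Or.inr (Or.inl ⟨by omega, by omega, by omega, by omega, by omega, by omega,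
        by omega, Or.inr (by omega)⟩))
    | exact Or.inr (Or.inr (Or.inr ⟨by omega, by omega, by omega, by omega, by omega,
        Or.inl (by omega)⟩))
    | exact Or.inr (Or.inr (Or.inr ⟨by omega, by omega, by omega, by omega, by omega,
        Or.inr (Or.inl (by omega))⟩))
    | exact Or.inr (Or.inr (Or.inr ⟨by omega, by omega, by omega, by omega, by omega,
        Or.inr (Or.inr (Or.inl (by omega)))⟩))
    | exact Or.inr (Or.inr (Or.inr ⟨by omega, by omega, by omega, by omega, by omega,
        Or.inr (Or.inr (Or.inr (by omega)))⟩))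

set_option maxHeartbeats 4000000 in
theorem ar_step1 (r a b c d n0 n1 n2 m0 m1 m2 s t : ℕ) (hr : 3 ≤ r)
    (h : Ar r a b c d n0 n1 n2) (hi : insBig r 1 b = some (s, t))
    (p0 : s = 0 → 0 < n0) (p1 : s = 1 → 0 < n1) (p2 : s = 2 → 0 < n2)
    (h0 : m0 + (if s = 0 then 1 else 0) = n0 + (if t = 0 then 1 else 0))
    (h1 : m1 + (if s = 1 then 1 else 0) = n1 + (if t = 1 then 1 else 0))
    (h2 : m2 + (if s = 2 then 1 else 0) = n2 + (if t = 2 then 1 else 0)) :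
    Ar r a (b + 1) c d m0 m1 m2 := by
  simp only [insBig] at hi
  obtain ⟨hn, h⟩ := h
  split_ifs at hi <;> simp only [Option.some.injEq, Prod.mk.injEq] at hi <;>
    obtain ⟨rfl, rfl⟩ := hi <;> simp at p0 p1 p2 h0 h1 h2 <;>
    refine ⟨by omega, ?_⟩ <;>
    rcases h with ⟨g1, g2, g3, g4, g5 | g5⟩ | ⟨g1, g2, g3, g4, g5, g6, g7 | g7⟩ |
      ⟨g1, g2, g3, g4, g5, g6, g7, g8 | g8⟩ | ⟨g1, g2, g3, g4, g5, g6 | g6 | g6 | g6⟩ <;>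
    first
    | (exfalso; omega)
    | exact Or.inl ⟨by omega, by omega, by omega, by omega, Or.inl (by omega)⟩
    | exact Or.inl ⟨by omega, by omega, by omega, by omega, Or.inr (by omega)⟩
    | exact Or.inr (Or.inl ⟨by omega, by omega, by omega, by omega, by omega, by omega,
        Or.inl (by omega)⟩)
    | exact Or.inr (Or.inl ⟨by omega, by omega, by omega, by omega, by omega, by omega,
        Or.inr (by omega)⟩)
    | exact Or.inr (Or.inr (Or.inl ⟨by omega, by omega, by omega, by omega, by omega, by omega,
        by omega, Or.inl (by omega)⟩))
    | exact Or.inr (Or.inr (Or.inl ⟨by omega, by omega, by omega, by omega, by omega, by omega,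
        by omega, Or.inr (by omega)⟩))
    | exact Or.inr (Or.inr (Or.inr ⟨by omega, by omega, by omega, by omega, by omega,
        Or.inl (by omega)⟩))
    | exact Or.inr (Or.inr (Or.inr ⟨by omega, by omega, by omega, by omega, by omega,
        Or.inr (Or.inl (by omega))⟩))
    | exact Or.inr (Or.inr (Or.inr ⟨by omega, by omega, by omega, by omega, by omega,
        Or.inr (Or.inr (Or.inl (by omega)))⟩))
    | exact Or.inr (Or.inr (Or.inr ⟨by omega, by omega, by omega, by omega, by omega,
        Or.inr (Or.inr (Or.inr (by omega)))⟩))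

set_option maxHeartbeats 4000000 in
theorem ar_step2 (r a b c d n0 n1 n2 m0 m1 m2 s t : ℕ) (hr : 3 ≤ r)
    (h : Ar r a b c d n0 n1 n2) (hi : insBig r 2 c = some (s, t))
    (p0 : s = 0 → 0 < n0) (p1 : s = 1 → 0 < n1) (p2 : s = 2 → 0 < n2)
    (h0 : m0 + (if s = 0 then 1 else 0) = n0 + (if t = 0 then 1 else 0))
    (h1 : m1 + (if s = 1 then 1 else 0) = n1 + (if t = 1 then 1 else 0))
    (h2 : m2 + (if s = 2 then 1 else 0) = n2 + (if t = 2 then 1 else 0)) :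
    Ar r a b (c + 1) d m0 m1 m2 := by
  simp only [insBig] at hi
  obtain ⟨hn, h⟩ := h
  split_ifs at hi <;> simp only [Option.some.injEq, Prod.mk.injEq] at hi <;>
    obtain ⟨rfl, rfl⟩ := hi <;> simp at p0 p1 p2 h0 h1 h2 <;>
    refine ⟨by omega, ?_⟩ <;>
    rcases h with ⟨g1, g2, g3, g4, g5 | g5⟩ | ⟨g1, g2, g3, g4, g5, g6, g7 | g7⟩ |
      ⟨g1, g2, g3, g4, g5, g6, g7, g8 | g8⟩ | ⟨g1, g2, g3, g4, g5, g6 | g6 | g6 | g6⟩ <;>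
    first
    | (exfalso; omega)
    | exact Or.inl ⟨by omega, by omega, by omega, by omega, Or.inl (by omega)⟩
    | exact Or.inl ⟨by omega, by omega, by omega, by omega, Or.inr (by omega)⟩
    | exact Or.inr (Or.inl ⟨by omega, by omega, by omega, by omega, by omega, by omega,
        Or.inl (by omega)⟩)
    | exact Or.inr (Or.inl ⟨by omega, by omega, by omega, by omega, by omega, by omega,
        Or.inr (by omega)⟩)
    | exact Or.inr (Or.inr (Or.inl ⟨by omega, by omega, by omega, by omega, by omega, by omega,
        by omega, Or.inl (by omega)⟩))
    | exact Or.inr (Or.inr (Or.inl ⟨by omega, by omega, by omega, by omega, by omega, by omega,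
        by omega, Or.inr (by omega)⟩))
    | exact Or.inr (Or.inr (Or.inr ⟨by omega, by omega, by omega, by omega, by omega,
        Or.inl (by omega)⟩))
    | exact Or.inr (Or.inr (Or.inr ⟨by omega, by omega, by omega, by omega, by omega,
        Or.inr (Or.inl (by omega))⟩))
    | exact Or.inr (Or.inr (Or.inr ⟨by omega, by omega, by omega, by omega, by omega,
        Or.inr (Or.inr (Or.inl (by omega)))⟩))
    | exact Or.inr (Or.inr (Or.inr ⟨by omega, by omega, by omega, by omega, by omega,
        Or.inr (Or.inr (Or.inr (by omega)))⟩))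

set_option maxHeartbeats 4000000 in
theorem ar_step3 (r a b c d n0 n1 n2 m0 m1 m2 s t : ℕ) (hr : 3 ≤ r)
    (h : Ar r a b c d n0 n1 n2) (hi : insBig r 3 d = some (s, t))
    (p0 : s = 0 → 0 < n0) (p1 : s = 1 → 0 < n1) (p2 : s = 2 → 0 < n2)
    (h0 : m0 + (if s = 0 then 1 else 0) = n0 + (if t = 0 then 1 else 0))
    (h1 : m1 + (if s = 1 then 1 else 0) = n1 + (if t = 1 then 1 else 0))
    (h2 : m2 + (if s = 2 then 1 else 0) = n2 + (if t = 2 then 1 else 0)) :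
    Ar r a b c (d + 1) m0 m1 m2 := by
  simp only [insBig] at hi
  obtain ⟨hn, h⟩ := h
  split_ifs at hi <;> simp only [Option.some.injEq, Prod.mk.injEq] at hi <;>
    obtain ⟨rfl, rfl⟩ := hi <;> simp at p0 p1 p2 h0 h1 h2 <;>
    refine ⟨by omega, ?_⟩ <;>
    rcases h with ⟨g1, g2, g3, g4, g5 | g5⟩ | ⟨g1, g2, g3, g4, g5, g6, g7 | g7⟩ |
      ⟨g1, g2, g3, g4, g5, g6, g7, g8 | g8⟩ | ⟨g1, g2, g3, g4, g5, g6 | g6 | g6 | g6⟩ <;>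
    first
    | (exfalso; omega)
    | exact Or.inl ⟨by omega, by omega, by omega, by omega, Or.inl (by omega)⟩
    | exact Or.inl ⟨by omega, by omega, by omega, by omega, Or.inr (by omega)⟩
    | exact Or.inr (Or.inl ⟨by omega, by omega, by omega, by omega, by omega, by omega,
        Or.inl (by omega)⟩)
    | exact Or.inr (Or.inl ⟨by omega, by omega, by omega, by omega, by omega, by omega,
        Or.inr (by omega)⟩)
    | exact Or.inr (Or.inr (Or.inl ⟨by omega, by omega, by omega, by omega, by omega, by omega,
        by omega, Or.inl (by omega)⟩))
    | exact Or.inr (Or.inr (Or.inl ⟨by omega, by omega, by omega, by omega, by omega, by omega,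
        by omega, Or.inr (by omega)⟩))
    | exact Or.inr (Or.inr (Or.inr ⟨by omega, by omega, by omega, by omega, by omega,
        Or.inl (by omega)⟩))
    | exact Or.inr (Or.inr (Or.inr ⟨by omega, by omega, by omega, by omega, by omega,
        Or.inr (Or.inl (by omega))⟩))
    | exact Or.inr (Or.inr (Or.inr ⟨by omega, by omega, by omega, by omega, by omega,
        Or.inr (Or.inr (Or.inl (by omega)))⟩))
    | exact Or.inr (Or.inr (Or.inr ⟨by omega, by omega, by omega, by omega, by omega,
        Or.inr (Or.inr (Or.inr (by omega)))⟩))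

end PrisonersGame


namespace PrisonersGame

set_option maxHeartbeats 8000000 in
theorem vis_step0 (r a b c d n0 n1 n2 m0 m1 m2 s t x y : ℕ) (vA vB vC vD : Prop) (hr : 3 ≤ r)
    (h : Ar r a b c d n0 n1 n2) (hi : insBig r 0 a = some (s, t))
    (p0 : s = 0 → 0 < n0) (p1 : s = 1 → 0 < n1) (p2 : s = 2 → 0 < n2)
    (h0 : m0 + (if s = 0 then 1 else 0) = n0 + (if t = 0 then 1 else 0))
    (h1 : m1 + (if s = 1 then 1 else 0) = n1 + (if t = 1 then 1 else 0))
    (h2 : m2 + (if s = 2 then 1 else 0) = n2 + (if t = 2 then 1 else 0))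
    (hy : y ≤ 2) (q0 : y = 0 → 0 < m0) (q1 : y = 1 → 0 < m1) (q2 : y = 2 → 0 < m2)
    (hxy : y = x ∨ (x = s ∧ y = t ∧ vA)) (hv : VisB r a b c x vA vB vC vD) :
    VisB r (a + 1) b c y vA vB vC vD := by
  simp only [insBig] at hi
  obtain ⟨hn, h⟩ := h
  obtain ⟨k1, k2, k3, k4⟩ := hv
  split_ifs at hi <;> simp only [Option.some.injEq, Prod.mk.injEq] at hi <;>
    obtain ⟨rfl, rfl⟩ := hi <;> simp at p0 p1 p2 h0 h1 h2 <;>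
    rcases h with ⟨g1, g2, g3, g4, g5 | g5⟩ | ⟨g1, g2, g3, g4, g5, g6, g7 | g7⟩ |
      ⟨g1, g2, g3, g4, g5, g6, g7, g8 | g8⟩ | ⟨g1, g2, g3, g4, g5, g6 | g6 | g6 | g6⟩ <;>
    first
    | (exfalso; clear k1 k2 k3 k4; omega)
    | (rcases hxy with rfl | ⟨e1, e2, e3⟩ <;> refine ⟨?_, fun w => ?_, fun w => ?_, fun w => ?_⟩ <;>
        first
        | (exfalso; omega)
        | exact Or.inl e3
        | (rcases k1 with k | k
           · exact Or.inl k
           · right; omega)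
        | (by_cases hc : r + 4 ≤ c
           · rcases k2 hc with k | k
             · exact Or.inl k
             · right; omega
           · right; omega)
        | (by_cases hc : 3 * r + 4 ≤ b
           · rcases k3 hc with k | k
             · exact Or.inl k
             · right; omega
           · right; omega)
        | (by_cases hc : 4 * r + 4 ≤ b
           · rcases k4 hc with k | k
             · exact Or.inl k
             · right; omega
           · right; omega))

set_option maxHeartbeats 8000000 in
theorem vis_step1 (r a b c d n0 n1 n2 m0 m1 m2 s t x y : ℕ) (vA vB vC vD : Prop) (hr : 3 ≤ r)
    (h : Ar r a b c d n0 n1 n2) (hi : insBig r 1 b = some (s, t))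
    (p0 : s = 0 → 0 < n0) (p1 : s = 1 → 0 < n1) (p2 : s = 2 → 0 < n2)
    (h0 : m0 + (if s = 0 then 1 else 0) = n0 + (if t = 0 then 1 else 0))
    (h1 : m1 + (if s = 1 then 1 else 0) = n1 + (if t = 1 then 1 else 0))
    (h2 : m2 + (if s = 2 then 1 else 0) = n2 + (if t = 2 then 1 else 0))
    (hy : y ≤ 2) (q0 : y = 0 → 0 < m0) (q1 : y = 1 → 0 < m1) (q2 : y = 2 → 0 < m2)
    (hxy : y = x ∨ (x = s ∧ y = t ∧ vB)) (hv : VisB r a b c x vA vB vC vD) :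
    VisB r a (b + 1) c y vA vB vC vD := by
  simp only [insBig] at hi
  obtain ⟨hn, h⟩ := h
  obtain ⟨k1, k2, k3, k4⟩ := hv
  split_ifs at hi <;> simp only [Option.some.injEq, Prod.mk.injEq] at hi <;>
    obtain ⟨rfl, rfl⟩ := hi <;> simp at p0 p1 p2 h0 h1 h2 <;>
    rcases h with ⟨g1, g2, g3, g4, g5 | g5⟩ | ⟨g1, g2, g3, g4, g5, g6, g7 | g7⟩ |
      ⟨g1, g2, g3, g4, g5, g6, g7, g8 | g8⟩ | ⟨g1, g2, g3, g4, g5, g6 | g6 | g6 | g6⟩ <;>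
    first
    | (exfalso; clear k1 k2 k3 k4; omega)
    | (rcases hxy with rfl | ⟨e1, e2, e3⟩ <;> refine ⟨?_, fun w => ?_, fun w => ?_, fun w => ?_⟩ <;>
        first
        | (exfalso; omega)
        | exact Or.inl e3
        | (rcases k1 with k | k
           · exact Or.inl k
           · right; omega)
        | (by_cases hc : r + 4 ≤ c
           · rcases k2 hc with k | k
             · exact Or.inl k
             · right; omega
           · right; omega)
        | (by_cases hc : 3 * r + 4 ≤ b
           · rcases k3 hc with k | k
             · exact Or.inl k
             · right; omega
           · right; omega)
        | (by_cases hc : 4 * r + 4 ≤ b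
           · rcases k4 hc with k | k
             · exact Or.inl k
             · right; omega
           · right; omega))

set_option maxHeartbeats 8000000 in
theorem vis_step2 (r a b c d n0 n1 n2 m0 m1 m2 s t x y : ℕ) (vA vB vC vD : Prop) (hr : 3 ≤ r)
    (h : Ar r a b c d n0 n1 n2) (hi : insBig r 2 c = some (s, t))
    (p0 : s = 0 → 0 < n0) (p1 : s = 1 → 0 < n1) (p2 : s = 2 → 0 < n2)
    (h0 : m0 + (if s = 0 then 1 else 0) = n0 + (if t = 0 then 1 else 0))
    (h1 : m1 + (if s = 1 then 1 else 0) = n1 + (if t = 1 then 1 else 0))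
    (h2 : m2 + (if s = 2 then 1 else 0) = n2 + (if t = 2 then 1 else 0))
    (hy : y ≤ 2) (q0 : y = 0 → 0 < m0) (q1 : y = 1 → 0 < m1) (q2 : y = 2 → 0 < m2)
    (hxy : y = x ∨ (x = s ∧ y = t ∧ vC)) (hv : VisB r a b c x vA vB vC vD) :
    VisB r a b (c + 1) y vA vB vC vD := by
  simp only [insBig] at hi
  obtain ⟨hn, h⟩ := h
  obtain ⟨k1, k2, k3, k4⟩ := hv
  split_ifs at hi <;> simp only [Option.some.injEq, Prod.mk.injEq] at hi <;>
    obtain ⟨rfl, rfl⟩ := hi <;> simp at p0 p1 p2 h0 h1 h2 <;>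
    rcases h with ⟨g1, g2, g3, g4, g5 | g5⟩ | ⟨g1, g2, g3, g4, g5, g6, g7 | g7⟩ |
      ⟨g1, g2, g3, g4, g5, g6, g7, g8 | g8⟩ | ⟨g1, g2, g3, g4, g5, g6 | g6 | g6 | g6⟩ <;>
    first
    | (exfalso; clear k1 k2 k3 k4; omega)
    | (rcases hxy with rfl | ⟨e1, e2, e3⟩ <;> refine ⟨?_, fun w => ?_, fun w => ?_, fun w => ?_⟩ <;>
        first
        | (exfalso; omega)
        | exact Or.inl e3
        | (rcases k1 with k | k
           · exact Or.inl k
           · right; omega)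
        | (by_cases hc : r + 4 ≤ c
           · rcases k2 hc with k | k
             · exact Or.inl k
             · right; omega
           · right; omega)
        | (by_cases hc : 3 * r + 4 ≤ b
           · rcases k3 hc with k | k
             · exact Or.inl k
             · right; omega
           · right; omega)
        | (by_cases hc : 4 * r + 4 ≤ b
           · rcases k4 hc with k | k
             · exact Or.inl k
             · right; omega
           · right; omega))

set_option maxHeartbeats 8000000 in
theorem vis_step3 (r a b c d n0 n1 n2 m0 m1 m2 s t x y : ℕ) (vA vB vC vD : Prop) (hr : 3 ≤ r)
    (h : Ar r a b c d n0 n1 n2) (hi : insBig r 3 d = some (s, t))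
    (p0 : s = 0 → 0 < n0) (p1 : s = 1 → 0 < n1) (p2 : s = 2 → 0 < n2)
    (h0 : m0 + (if s = 0 then 1 else 0) = n0 + (if t = 0 then 1 else 0))
    (h1 : m1 + (if s = 1 then 1 else 0) = n1 + (if t = 1 then 1 else 0))
    (h2 : m2 + (if s = 2 then 1 else 0) = n2 + (if t = 2 then 1 else 0))
    (hy : y ≤ 2) (q0 : y = 0 → 0 < m0) (q1 : y = 1 → 0 < m1) (q2 : y = 2 → 0 < m2)
    (hxy : y = x ∨ (x = s ∧ y = t ∧ vD)) (hv : VisB r a b c x vA vB vC vD) :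
    VisB r a b c y vA vB vC vD := by
  simp only [insBig] at hi
  obtain ⟨hn, h⟩ := h
  obtain ⟨k1, k2, k3, k4⟩ := hv
  split_ifs at hi <;> simp only [Option.some.injEq, Prod.mk.injEq] at hi <;>
    obtain ⟨rfl, rfl⟩ := hi <;> simp at p0 p1 p2 h0 h1 h2 <;>
    rcases h with ⟨g1, g2, g3, g4, g5 | g5⟩ | ⟨g1, g2, g3, g4, g5, g6, g7 | g7⟩ |
      ⟨g1, g2, g3, g4, g5, g6, g7, g8 | g8⟩ | ⟨g1, g2, g3, g4, g5, g6 | g6 | g6 | g6⟩ <;>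
    first
    | (exfalso; clear k1 k2 k3 k4; omega)
    | (rcases hxy with rfl | ⟨e1, e2, e3⟩ <;> refine ⟨?_, fun w => ?_, fun w => ?_, fun w => ?_⟩ <;>
        first
        | (exfalso; omega)
        | exact Or.inl e3
        | (rcases k1 with k | k
           · exact Or.inl k
           · right; omega)
        | (by_cases hc : r + 4 ≤ c
           · rcases k2 hc with k | k
             · exact Or.inl k
             · right; omega
           · right; omega)
        | (by_cases hc : 3 * r + 4 ≤ b
           · rcases k3 hc with k | k
             · exact Or.inl k
             · right; omega
           · right; omega)
        | (by_cases hc : 4 * r + 4 ≤ b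
           · rcases k4 hc with k | k
             · exact Or.inl k
             · right; omega
           · right; omega))

end PrisonersGame


namespace PrisonersGame

def certBig (r : ℕ) (hr : 3 ≤ r) : Cert r where
  ins := insBig r
  len := 6 * r + 6
  dv := 1
  E := 6 * r + 4
  Inv := fun R p vis =>
    Ar r (p 0) (p 1) (p 2) (p 3) (cnt R 0) (cnt R 1) (cnt R 2) ∧ (∀ i, R i ≤ 2) ∧
      ∀ i, VisB r (p 0) (p 1) (p 2) (R i) (vis 0 i) (vis 1 i) (vis 2 i) (vis 3 i)
  tgt_lt := by
    intro v k a b h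
    fin_cases v <;> simp only [insBig] at h <;> split_ifs at h <;> simp at h <;> omega
  len_lt := by
    intro v k a b h
    fin_cases v <;> simp only [insBig] at h <;> split_ifs at h <;> omega
  init := by
    intro vis
    refine ⟨?_, by simp, ?_⟩
    · simp only [cnt_const]
      exact ⟨by simp, Or.inl ⟨by omega, by omega, by omega, by omega, Or.inl (by simp)⟩⟩
    · intro i
      exact ⟨Or.inr ⟨rfl, by simp; omega⟩, fun h => by simp at h, fun h => by simp at h,
        fun h => by simp at h⟩
  mono := by
    rintro R p vis vis' ⟨h1, h2, h3⟩ hm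
    refine ⟨h1, h2, fun i => ?_⟩
    obtain ⟨k1, k2, k3, k4⟩ := h3 i
    exact ⟨k1.imp_left (hm 0 i), fun h => (k2 h).imp_left (hm 2 i),
      fun h => (k3 h).imp_left (hm 1 i), fun h => (k4 h).imp_left (hm 3 i)⟩
  step := by
    rintro R p vis v i b ⟨h1, h2, h3⟩ hvis hi
    have c0 := cnt_update R i b 0
    have c1 := cnt_update R i b 1
    have c2 := cnt_update R i b 2
    have hb : b ≤ 2 := by
      fin_cases v <;> simp only [insBig] at hi <;> split_ifs at hi <;> simp at hi <;> omega
    have hR' : ∀ j, Function.update R i b j ≤ 2 := by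
      intro j
      by_cases hj : j = i
      · subst hj; simpa using hb
      · simpa [hj] using h2 j
    have hxy : ∀ j, Function.update R i b j = R j ∨
        (R j = R i ∧ Function.update R i b j = b ∧ vis v j) := by
      intro j
      by_cases hj : j = i
      · subst hj; right; simpa using hvis
      · left; simp [hj]
    have n01 : (1 : Fin 4) ≠ 0 := by decide
    have n02 : (2 : Fin 4) ≠ 0 := by decide
    have n03 : (3 : Fin 4) ≠ 0 := by decide
    have n12 : (2 : Fin 4) ≠ 1 := by decide
    have n13 : (3 : Fin 4) ≠ 1 := by decide
    have n23 : (3 : Fin 4) ≠ 2 := by decide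
    have hv : v = 0 ∨ v = 1 ∨ v = 2 ∨ v = 3 := by omega
    refine ⟨?_, hR', fun j => ?_⟩
    · rcases hv with rfl | rfl | rfl | rfl
      · simpa [n01, n02, n03] using ar_step0 r _ _ _ _ _ _ _ _ _ _ _ _ hr h1 hi (cnt_pos' R i 0)
          (cnt_pos' R i 1) (cnt_pos' R i 2) c0 c1 c2
      · simpa [n01.symm, n12, n13] using ar_step1 r _ _ _ _ _ _ _ _ _ _ _ _ hr h1 hi
          (cnt_pos' R i 0) (cnt_pos' R i 1) (cnt_pos' R i 2) c0 c1 c2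
      · simpa [n02.symm, n12.symm, n23] using ar_step2 r _ _ _ _ _ _ _ _ _ _ _ _ hr h1 hi
          (cnt_pos' R i 0) (cnt_pos' R i 1) (cnt_pos' R i 2) c0 c1 c2
      · simpa [n03.symm, n13.symm, n23.symm] using ar_step3 r _ _ _ _ _ _ _ _ _ _ _ _ hr h1 hi
          (cnt_pos' R i 0) (cnt_pos' R i 1) (cnt_pos' R i 2) c0 c1 c2
    · rcases hv with rfl | rfl | rfl | rfl
      · have := vis_step0 r _ _ _ _ _ _ _ _ _ _ _ _ _ _ _ (vis 1 j) (vis 2 j) (vis 3 j) hr h1 hi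
          (cnt_pos' R i 0) (cnt_pos' R i 1) (cnt_pos' R i 2) c0 c1 c2 (hR' j)
          (cnt_pos' _ j 0) (cnt_pos' _ j 1) (cnt_pos' _ j 2) (hxy j) (h3 j)
        rwa [Function.update_self, Function.update_of_ne n01, Function.update_of_ne n02]
      · have := vis_step1 r _ _ _ _ _ _ _ _ _ _ _ _ _ _ (vis 0 j) _ (vis 2 j) (vis 3 j) hr h1 hi
          (cnt_pos' R i 0) (cnt_pos' R i 1) (cnt_pos' R i 2) c0 c1 c2 (hR' j)
          (cnt_pos' _ j 0) (cnt_pos' _ j 1) (cnt_pos' _ j 2) (hxy j) (h3 j)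
        rwa [Function.update_self, Function.update_of_ne n01.symm, Function.update_of_ne n12]
      · have := vis_step2 r _ _ _ _ _ _ _ _ _ _ _ _ _ _ (vis 0 j) (vis 1 j) _ (vis 3 j) hr h1 hi
          (cnt_pos' R i 0) (cnt_pos' R i 1) (cnt_pos' R i 2) c0 c1 c2 (hR' j)
          (cnt_pos' _ j 0) (cnt_pos' _ j 1) (cnt_pos' _ j 2) (hxy j) (h3 j)
        rwa [Function.update_self, Function.update_of_ne n02.symm, Function.update_of_ne n12.symm]
      · have := vis_step3 r _ _ _ _ _ _ _ _ _ _ _ _ _ _ (vis 0 j) (vis 1 j) (vis 2 j) _ hr h1 hi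
          (cnt_pos' R i 0) (cnt_pos' R i 1) (cnt_pos' R i 2) c0 c1 c2 (hR' j)
          (cnt_pos' _ j 0) (cnt_pos' _ j 1) (cnt_pos' _ j 2) (hxy j) (h3 j)
        rwa [Function.update_of_ne n03.symm, Function.update_of_ne n13.symm,
          Function.update_of_ne n23.symm]
  progress := by
    rintro R p vis ⟨h1, h2, h3⟩
    by_contra hcon
    push Not at hcon
    obtain ⟨hne, hcon⟩ := hcon
    apply hne
    have hs : ∀ v, Stuck (insBig r v (p v)) (cnt R 0) (cnt R 1) (cnt R 2) := by
      rintro v s t hst (⟨rfl, hp⟩ | ⟨rfl, hp⟩ | ⟨rfl, hp⟩) <;>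
      · obtain ⟨i, hi⟩ := cnt_ex hp
        exact hcon v i t (by rw [hi]; exact hst)
    exact ar_progress r _ _ _ _ _ _ _ hr h1 (hs 0) (hs 1) (hs 2) (hs 3)
  done := by
    rintro R p vis ⟨⟨hn, h1⟩, h2, h3⟩ hE v i
    have hc : p 0 = 4 * r + 4 ∧ p 2 = 6 * r + 6 ∧ cnt R 1 = 0 := by
      rcases h1 with ⟨g1, g2, g3, g4, g5 | g5⟩ | ⟨g1, g2, g3, g4, g5, g6, g7 | g7⟩ |
        ⟨g1, g2, g3, g4, g5, g6, g7, g8 | g8⟩ | ⟨g1, g2, g3, g4, g5, g6 | g6 | g6 | g6⟩ <;> omega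
    obtain ⟨ha, hc, hn1⟩ := hc
    obtain ⟨k1, k2, k3, k4⟩ := h3 i
    have hv : v = 0 ∨ v = 1 ∨ v = 2 ∨ v = 3 := by omega
    rcases hv with rfl | rfl | rfl | rfl
    · exact k1.resolve_right (by omega)
    · exact (k3 (by omega)).resolve_right (by omega)
    · exact (k2 (by omega)).resolve_right (by omega)
    · exact (k4 (by omega)).resolve_right (by omega)

/-! The case of one room. -/

def ins1 (v : Fin 4) (k : ℕ) : Option (ℕ × ℕ) :=
  match v with
  | 0 => if k < 1 then some (0, 1) else if k < 4 then some (2, 1) else none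
  | 1 => if k < 1 then some (1, 2) else none
  | 2 => if k < 1 then some (1, 2) else none
  | 3 => if k < 1 then some (1, 2) else none

def Ar1 (a b c d x : ℕ) : Prop :=
  (a = 0 ∧ x = 0 ∧ b = 0 ∧ c = 0 ∧ d = 0) ∨
  (1 ≤ a ∧ a ≤ 4 ∧ b ≤ 1 ∧ c ≤ 1 ∧ d ≤ 1 ∧ ((x = 1 ∧ a = b + c + d + 1) ∨ (x = 2 ∧ a = b + c + d)))

def cert1 : Cert 1 where
  ins := ins1
  len := 4
  dv := 0
  E := 4
  Inv := fun R p vis => Ar1 (p 0) (p 1) (p 2) (p 3) (R 0) ∧ ∀ v, 1 ≤ p v → vis v 0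
  tgt_lt := by
    intro v k a b h
    fin_cases v <;> simp only [ins1] at h <;> split_ifs at h <;> simp at h <;> omega
  len_lt := by
    intro v k a b h
    fin_cases v <;> simp only [ins1] at h <;> split_ifs at h <;> omega
  init := by
    intro vis
    exact ⟨Or.inl (by simp), by simp⟩
  mono := by
    rintro R p vis vis' ⟨h1, h2⟩ hm
    exact ⟨h1, fun v h => hm _ _ (h2 v h)⟩
  step := by
    rintro R p vis v i b ⟨h1, h2⟩ hvis hi
    obtain rfl : i = 0 := Subsingleton.elim _ _
    refine ⟨?_, ?_⟩
    · unfold Ar1 at h1 ⊢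
      have hv : v = 0 ∨ v = 1 ∨ v = 2 ∨ v = 3 := by omega
      rcases hv with rfl | rfl | rfl | rfl <;> simp only [ins1] at hi <;> split_ifs at hi <;>
        simp at hi <;> obtain ⟨hi, rfl⟩ := hi <;> simp <;> omega
    · intro w hw
      by_cases hwv : w = v
      · subst hwv; exact hvis
      · rw [Function.update_of_ne hwv] at hw; exact h2 w hw
  progress := by
    rintro R p vis ⟨h1, h2⟩
    by_contra hcon
    push Not at hcon
    obtain ⟨hne, hcon⟩ := hcon
    have hA := hcon 0 0
    have hB := hcon 1 0
    have hC := hcon 2 0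
    have hD := hcon 3 0
    simp only [ins1] at hA hB hC hD
    have hA' : (p 0 < 1 → R 0 ≠ 0) ∧ (1 ≤ p 0 → p 0 < 4 → R 0 ≠ 2) := by
      refine ⟨fun h e => hA 1 (by simp [h, e]), fun h h' e => hA 1 ?_⟩
      rw [if_neg (by omega), if_pos h', e]
    have hB' : p 1 < 1 → R 0 ≠ 1 := fun h e => hB 2 (by simp [h, e])
    have hC' : p 2 < 1 → R 0 ≠ 1 := fun h e => hC 2 (by simp [h, e])
    have hD' : p 3 < 1 → R 0 ≠ 1 := fun h e => hD 2 (by simp [h, e])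
    unfold Ar1 at h1
    omega
  done := by
    rintro R p vis ⟨h1, h2⟩ hE v i
    obtain rfl : i = 0 := Subsingleton.elim _ _
    apply h2
    unfold Ar1 at h1
    have hv : v = 0 ∨ v = 1 ∨ v = 2 ∨ v = 3 := by omega
    rcases hv with rfl | rfl | rfl | rfl <;> omega

/-! The case of two rooms. -/

def ins2 (v : Fin 4) (k : ℕ) : Option (ℕ × ℕ) :=
  match v with
  | 0 => if k < 2 then some (0, 1) else if k < 11 then some (2, 1)
      else if k < 12 then some (1, 0) else none
  | 1 => if k < 3 then some (1, 2) else if k < 4 then some (0, 0)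
      else if k < 5 then some (1, 2) else none
  | 2 => if k < 3 then some (1, 2) else if k < 4 then some (0, 0)
      else if k < 6 then some (2, 1) else none
  | 3 => if k < 3 then some (1, 2) else if k < 4 then some (0, 0)
      else if k < 5 then some (1, 2) else none

def Ar2 (a b c d n0 n1 n2 : ℕ) : Prop :=
  n0 + n1 + n2 = 2 ∧ (Ph1 2 a b c d n0 n2 ∨ (a = 12 ∧ n0 = 1 ∧ 3 ≤ b ∧ b ≤ 5 ∧ 3 ≤ d ∧ d ≤ 5 ∧
    3 ≤ c ∧ c ≤ 6 ∧ n2 + (c - 4) = (b - 4) + (d - 4)))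

theorem ar2_step0 (a b c d n0 n1 n2 m0 m1 m2 s t : ℕ)
    (h : Ar2 a b c d n0 n1 n2) (hi : ins2 0 a = some (s, t))
    (p0 : s = 0 → 0 < n0) (p1 : s = 1 → 0 < n1) (p2 : s = 2 → 0 < n2)
    (h0 : m0 + (if s = 0 then 1 else 0) = n0 + (if t = 0 then 1 else 0))
    (h1 : m1 + (if s = 1 then 1 else 0) = n1 + (if t = 1 then 1 else 0))
    (h2 : m2 + (if s = 2 then 1 else 0) = n2 + (if t = 2 then 1 else 0)) :
    Ar2 (a + 1) b c d m0 m1 m2 := by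
  simp only [ins2] at hi
  obtain ⟨hn, h⟩ := h
  split_ifs at hi <;> simp only [Option.some.injEq, Prod.mk.injEq] at hi <;>
    obtain ⟨rfl, rfl⟩ := hi <;> simp at p0 p1 p2 h0 h1 h2 <;>
    refine ⟨by omega, ?_⟩ <;>
    rcases h with ⟨g1, g2, g3, g4, g5 | g5⟩ | g1 <;>
    first
    | (exfalso; omega)
    | exact Or.inl ⟨by omega, by omega, by omega, by omega, Or.inl (by omega)⟩
    | exact Or.inl ⟨by omega, by omega, by omega, by omega, Or.inr (by omega)⟩
    | exact Or.inr (by omega)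

theorem ar2_step1 (a b c d n0 n1 n2 m0 m1 m2 s t : ℕ)
    (h : Ar2 a b c d n0 n1 n2) (hi : ins2 1 b = some (s, t))
    (p0 : s = 0 → 0 < n0) (p1 : s = 1 → 0 < n1) (p2 : s = 2 → 0 < n2)
    (h0 : m0 + (if s = 0 then 1 else 0) = n0 + (if t = 0 then 1 else 0))
    (h1 : m1 + (if s = 1 then 1 else 0) = n1 + (if t = 1 then 1 else 0))
    (h2 : m2 + (if s = 2 then 1 else 0) = n2 + (if t = 2 then 1 else 0)) :
    Ar2 a (b + 1) c d m0 m1 m2 := by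
  simp only [ins2] at hi
  obtain ⟨hn, h⟩ := h
  split_ifs at hi <;> simp only [Option.some.injEq, Prod.mk.injEq] at hi <;>
    obtain ⟨rfl, rfl⟩ := hi <;> simp at p0 p1 p2 h0 h1 h2 <;>
    refine ⟨by omega, ?_⟩ <;>
    rcases h with ⟨g1, g2, g3, g4, g5 | g5⟩ | g1 <;>
    first
    | (exfalso; omega)
    | exact Or.inl ⟨by omega, by omega, by omega, by omega, Or.inl (by omega)⟩
    | exact Or.inl ⟨by omega, by omega, by omega, by omega, Or.inr (by omega)⟩
    | exact Or.inr (by omega)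

theorem ar2_step2 (a b c d n0 n1 n2 m0 m1 m2 s t : ℕ)
    (h : Ar2 a b c d n0 n1 n2) (hi : ins2 2 c = some (s, t))
    (p0 : s = 0 → 0 < n0) (p1 : s = 1 → 0 < n1) (p2 : s = 2 → 0 < n2)
    (h0 : m0 + (if s = 0 then 1 else 0) = n0 + (if t = 0 then 1 else 0))
    (h1 : m1 + (if s = 1 then 1 else 0) = n1 + (if t = 1 then 1 else 0))
    (h2 : m2 + (if s = 2 then 1 else 0) = n2 + (if t = 2 then 1 else 0)) :
    Ar2 a b (c + 1) d m0 m1 m2 := by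
  simp only [ins2] at hi
  obtain ⟨hn, h⟩ := h
  split_ifs at hi <;> simp only [Option.some.injEq, Prod.mk.injEq] at hi <;>
    obtain ⟨rfl, rfl⟩ := hi <;> simp at p0 p1 p2 h0 h1 h2 <;>
    refine ⟨by omega, ?_⟩ <;>
    rcases h with ⟨g1, g2, g3, g4, g5 | g5⟩ | g1 <;>
    first
    | (exfalso; omega)
    | exact Or.inl ⟨by omega, by omega, by omega, by omega, Or.inl (by omega)⟩
    | exact Or.inl ⟨by omega, by omega, by omega, by omega, Or.inr (by omega)⟩
    | exact Or.inr (by omega)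

theorem ar2_step3 (a b c d n0 n1 n2 m0 m1 m2 s t : ℕ)
    (h : Ar2 a b c d n0 n1 n2) (hi : ins2 3 d = some (s, t))
    (p0 : s = 0 → 0 < n0) (p1 : s = 1 → 0 < n1) (p2 : s = 2 → 0 < n2)
    (h0 : m0 + (if s = 0 then 1 else 0) = n0 + (if t = 0 then 1 else 0))
    (h1 : m1 + (if s = 1 then 1 else 0) = n1 + (if t = 1 then 1 else 0))
    (h2 : m2 + (if s = 2 then 1 else 0) = n2 + (if t = 2 then 1 else 0)) :
    Ar2 a b c (d + 1) m0 m1 m2 := by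
  simp only [ins2] at hi
  obtain ⟨hn, h⟩ := h
  split_ifs at hi <;> simp only [Option.some.injEq, Prod.mk.injEq] at hi <;>
    obtain ⟨rfl, rfl⟩ := hi <;> simp at p0 p1 p2 h0 h1 h2 <;>
    refine ⟨by omega, ?_⟩ <;>
    rcases h with ⟨g1, g2, g3, g4, g5 | g5⟩ | g1 <;>
    first
    | (exfalso; omega)
    | exact Or.inl ⟨by omega, by omega, by omega, by omega, Or.inl (by omega)⟩
    | exact Or.inl ⟨by omega, by omega, by omega, by omega, Or.inr (by omega)⟩
    | exact Or.inr (by omega)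

def Vis2 (p : Fin 4 → ℕ) (x : ℕ) (vis : Fin 4 → Prop) : Prop :=
  (vis 0 ∨ (x = 0 ∧ p 0 < 2)) ∧ ∀ v, v ≠ 0 → (4 ≤ p v → x = 0 → vis v) ∧ (5 ≤ p v → vis v)

def cert2 : Cert 2 where
  ins := ins2
  len := 12
  dv := 2
  E := 6
  Inv := fun R p vis => Ar2 (p 0) (p 1) (p 2) (p 3) (cnt R 0) (cnt R 1) (cnt R 2) ∧
    ∀ i, Vis2 p (R i) (fun v => vis v i)
  tgt_lt := by
    intro v k a b h
    fin_cases v <;> simp only [ins2] at h <;> split_ifs at h <;> simp at h <;> omega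
  len_lt := by
    intro v k a b h
    fin_cases v <;> simp only [ins2] at h <;> split_ifs at h <;> omega
  init := by
    intro vis
    refine ⟨?_, ?_⟩
    · simp only [cnt_const]
      exact ⟨by simp, Or.inl ⟨by omega, by omega, by omega, by omega, Or.inl (by simp)⟩⟩
    · intro i
      exact ⟨Or.inr ⟨rfl, by simp⟩, fun v _ => ⟨fun h => by simp at h, fun h => by simp at h⟩⟩
  mono := by
    rintro R p vis vis' ⟨h1, h3⟩ hm
    refine ⟨h1, fun i => ?_⟩
    obtain ⟨k1, k2⟩ := h3 i
    exact ⟨k1.imp_left (hm 0 i), fun v hv =>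
      ⟨fun h h' => hm _ _ ((k2 v hv).1 h h'), fun h => hm _ _ ((k2 v hv).2 h)⟩⟩
  step := by
    rintro R p vis v i b ⟨h1, h3⟩ hvis hi
    have c0 := cnt_update R i b 0
    have c1 := cnt_update R i b 1
    have c2 := cnt_update R i b 2
    have p0 := cnt_pos' R i 0
    have p1 := cnt_pos' R i 1
    have p2 := cnt_pos' R i 2
    have hv : v = 0 ∨ v = 1 ∨ v = 2 ∨ v = 3 := by omega
    have hAr : Ar2 (Function.update p v (p v + 1) 0) (Function.update p v (p v + 1) 1)
        (Function.update p v (p v + 1) 2) (Function.update p v (p v + 1) 3)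
        (cnt (Function.update R i b) 0) (cnt (Function.update R i b) 1)
        (cnt (Function.update R i b) 2) := by
      rcases hv with rfl | rfl | rfl | rfl
      · simpa using ar2_step0 _ _ _ _ _ _ _ _ _ _ _ _ h1 hi p0 p1 p2 c0 c1 c2
      · simpa using ar2_step1 _ _ _ _ _ _ _ _ _ _ _ _ h1 hi p0 p1 p2 c0 c1 c2
      · simpa using ar2_step2 _ _ _ _ _ _ _ _ _ _ _ _ h1 hi p0 p1 p2 c0 c1 c2
      · simpa using ar2_step3 _ _ _ _ _ _ _ _ _ _ _ _ h1 hi p0 p1 p2 c0 c1 c2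
    refine ⟨hAr, fun j => ?_⟩
    -- the other room
    have hother : j ≠ i → R i ≠ 0 → 0 < cnt R 0 → R j = 0 := by
      intro hj hRi hp
      obtain ⟨k, hk⟩ := cnt_ex hp
      have hki : k ≠ i := fun e => hRi (e ▸ hk)
      have : k = j := by omega
      exact this ▸ hk
    have q0 := cnt_pos' (Function.update R i b) j 0
    have htwo : j ≠ i → R i = 0 → R j = 0 → 2 ≤ cnt R 0 := by
      intro hj e1 e2
      have u1 := cnt_update R i 5 0
      have u2 := cnt_pos' (Function.update R i 5) j 0 (by simp [hj, e2])
      simp [e1] at u1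
      omega
    have fa : p 0 < 2 → ∀ w, w ≠ 0 → p w < 3 := by
      intro hp w hw
      have hw : w = 1 ∨ w = 2 ∨ w = 3 := by omega
      obtain ⟨hn, ⟨g1, g2, g3, g4, g5 | g5⟩ | g1⟩ := h1 <;> rcases hw with rfl | rfl | rfl <;>
        omega
    have fb : ∀ w, w ≠ 0 → 3 ≤ p w → (4 ≤ p w ∨ 0 < cnt R 0) → p 0 = 12 ∧ cnt R 0 = 1 := by
      intro w hw hp
      have hw : w = 1 ∨ w = 2 ∨ w = 3 := by omega
      obtain ⟨hn, ⟨g1, g2, g3, g4, g5 | g5⟩ | g1⟩ := h1 <;> rcases hw with rfl | rfl | rfl <;>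
        omega
    have hins : v ≠ 0 → (p v < 3 ∧ R i = 1 ∧ b = 2) ∨ (p v = 3 ∧ R i = 0 ∧ b = 0) ∨
        (4 ≤ p v ∧ R i ≠ 0 ∧ b ≠ 0) := by
      intro hv0
      rcases hv with rfl | rfl | rfl | rfl
      · exact absurd rfl hv0
      all_goals
        simp only [ins2] at hi
        split_ifs at hi <;> simp at hi <;> omega
    have hinsA : v = 0 → (p 0 < 2 ∧ R i = 0 ∧ b = 1) ∨ (2 ≤ p 0 ∧ p 0 < 12 ∧ R i ≠ 0) := by
      rintro rfl
      simp only [ins2] at hi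
      split_ifs at hi <;> simp at hi <;> omega
    have hA2 : p 0 = 1 → cnt R 0 = 1 := by
      intro hp
      obtain ⟨hn, ⟨g1, g2, g3, g4, g5 | g5⟩ | g1⟩ := h1 <;> omega
    obtain ⟨k1, k2⟩ := h3 j
    refine ⟨?_, fun w hw => ?_⟩
    · rcases k1 with k1 | k1
      · exact Or.inl k1
      · by_cases hj : j = i
        · subst hj
          by_cases hv0 : v = 0
          · subst hv0; exact Or.inl hvis
          · exfalso
            have := fa k1.2 v hv0
            have := hins hv0
            omega
        · right
          rw [Function.update_of_ne hj] at q0 ⊢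
          refine ⟨k1.1, ?_⟩
          by_cases hv0 : v = 0
          · subst hv0
            rw [Function.update_self]
            by_contra hp
            have e1 := hA2 (by omega)
            have e2 := hinsA rfl
            have e3 : R i = 0 := by omega
            have e4 := htwo hj e3 k1.1
            omega
          · rw [Function.update_of_ne (Ne.symm hv0)]; exact k1.2
    · by_cases hwv : w = v
      · subst hwv
        by_cases hj : j = i
        · subst hj
          exact ⟨fun _ _ => hvis, fun _ => hvis⟩
        · rw [Function.update_of_ne hj, Function.update_self]
          have e1 := hins hw
          have key : 4 ≤ p w → vis w j := by
            intro h4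
            have e2 := fb w hw (by omega) (Or.inl h4)
            exact (k2 w hw).1 h4 (hother hj (by omega) (by omega))
          refine ⟨fun h4 hx => ?_, fun h5 => key (by omega)⟩
          by_cases h4' : 4 ≤ p w
          · exact key h4'
          · exfalso
            have e3 : R i = 0 := by omega
            have e4 := htwo hj e3 hx
            have e2 := fb w hw (by omega) (Or.inr (by omega))
            omega
      · rw [Function.update_of_ne hwv]
        refine ⟨fun h4 hx => ?_, (k2 w hw).2⟩
        by_cases hj : j = i
        · subst hj
          rw [Function.update_self] at hx
          have e2 := fb w hw (by omega) (Or.inl h4)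
          by_cases hv0 : v = 0
          · have := hinsA hv0
            omega
          · have := hins hv0
            exact (k2 w hw).1 h4 (by omega)
        · rw [Function.update_of_ne hj] at hx
          exact (k2 w hw).1 h4 hx
  progress := by
    rintro R p vis ⟨h1, h2⟩
    by_contra hcon
    push Not at hcon
    obtain ⟨hne, hcon⟩ := hcon
    have hs : ∀ v, Stuck (ins2 v (p v)) (cnt R 0) (cnt R 1) (cnt R 2) := by
      rintro v s t hst (⟨rfl, hp⟩ | ⟨rfl, hp⟩ | ⟨rfl, hp⟩) <;>
      · obtain ⟨i, hi⟩ := cnt_ex hp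
        exact hcon v i t (by rw [hi]; exact hst)
    have hA := hs 0
    have hB := hs 1
    have hC := hs 2
    have hD := hs 3
    simp only [ins2] at hA hB hC hD
    have hA' : (p 0 < 2 → cnt R 0 = 0) ∧ (2 ≤ p 0 → p 0 < 11 → cnt R 2 = 0) ∧
        (p 0 = 11 → cnt R 1 = 0) := by
      split_ifs at hA <;> (try have := hA.s0) <;> (try have := hA.s1) <;> (try have := hA.s2) <;>
        omega
    have hB' : (p 1 < 3 → cnt R 1 = 0) ∧ (p 1 = 3 → cnt R 0 = 0) ∧ (p 1 = 4 → cnt R 1 = 0) := by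
      split_ifs at hB <;> (try have := hB.s0) <;> (try have := hB.s1) <;> (try have := hB.s2) <;>
        omega
    have hC' : (p 2 < 3 → cnt R 1 = 0) ∧ (p 2 = 3 → cnt R 0 = 0) ∧
        (4 ≤ p 2 → p 2 < 6 → cnt R 2 = 0) := by
      split_ifs at hC <;> (try have := hC.s0) <;> (try have := hC.s1) <;> (try have := hC.s2) <;>
        omega
    have hD' : (p 3 < 3 → cnt R 1 = 0) ∧ (p 3 = 3 → cnt R 0 = 0) ∧ (p 3 = 4 → cnt R 1 = 0) := by
      split_ifs at hD <;> (try have := hD.s0) <;> (try have := hD.s1) <;> (try have := hD.s2) <;>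
        omega
    clear hA hB hC hD hs hcon
    obtain ⟨hn, ⟨g1, g2, g3, g4, g5 | g5⟩ | h1⟩ := h1 <;> omega
  done := by
    rintro R p vis ⟨⟨hn, h1⟩, h3⟩ hE v i
    obtain ⟨k1, k2⟩ := h3 i
    have hc : p 0 = 12 ∧ p 1 = 5 ∧ p 3 = 5 := by
      rcases h1 with ⟨g1, g2, g3, g4, g5 | g5⟩ | h1 <;> omega
    have hv : v = 0 ∨ v = 1 ∨ v = 2 ∨ v = 3 := by omega
    rcases hv with rfl | rfl | rfl | rfl
    · exact k1.resolve_right (by omega)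
    · exact (k2 1 (by decide)).2 (by omega)
    · exact (k2 2 (by decide)).2 (by omega)
    · exact (k2 3 (by decide)).2 (by omega)

end PrisonersGame


open PrisonersGame in
/-- For `1 ≤ n ≤ 4` prisoners, any number of rooms `r ≥ 1` and any number of
states `q ≥ 3`, the prisoners have a winning strategy. -/
theorem winning_strategy_up_to_four (n r q : ℕ) (hn1 : 1 ≤ n) (hn4 : n ≤ 4)
    (hr : 1 ≤ r) (hq : 3 ≤ q) : HasWinningStrategy n r q := by
  rcases Nat.lt_or_ge r 3 with h | h
  · have : r = 1 ∨ r = 2 := by omega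
    rcases this with rfl | rfl
    · exact cert1.wins n q hn1 hn4 hq
    · exact cert2.wins n q hn1 hn4 hq
  · exact (certBig r h).wins n q hn1 hn4 hq
end
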